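/- arXiv:2402.03107 — 2 statements merged into one kernel-verified Lean document; each statement's English description precedes it below -/
import Mathlib

section
/- Let T be a set of permutation patterns of arbitrary lengths and let G be a finite nontrivial abelian group. Suppose there exists n_0 ∈ ℕ such that for every n ≥ n_0 the group ⟨S_n(T)⟩ is isomorphic to G. Then G is isomorphic to ℤ_2 (the cyclic group of order 2) or to ℤ_2 × ℤ_2 (the Klein four-group). -/
/-- A permutation `π ∈ S_n` contains the pattern `τ ∈ S_k` if there is a strictly
increasing `f : Fin k → Fin n` such that `τ a < τ b ↔ π (f a) < π (f b)`. -/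
def PermContains {k n : ℕ} (τ : Equiv.Perm (Fin k)) (π : Equiv.Perm (Fin n)) : Prop :=
  ∃ f : Fin k → Fin n, StrictMono f ∧ ∀ a b : Fin k, τ a < τ b ↔ π (f a) < π (f b)

/-- `avoidSet n T` is `S_n(T)`: the permutations of `Fin n` avoiding every pattern in `T`,
where `T` is a set of permutations of arbitrary lengths. -/
def avoidSet (n : ℕ) (T : Set (Σ k : ℕ, Equiv.Perm (Fin k))) : Set (Equiv.Perm (Fin n)) :=
  {π | ∀ τ ∈ T, ¬ PermContains τ.2 π}

open Equiv

theorem PermContains.trans {k m n : ℕ} {ρ : Perm (Fin k)} {τ : Perm (Fin m)} {π : Perm (Fin n)}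
    (h₁ : PermContains ρ τ) (h₂ : PermContains τ π) : PermContains ρ π := by
  obtain ⟨f, hf, hf'⟩ := h₁
  obtain ⟨g, hg, hg'⟩ := h₂
  exact ⟨g ∘ f, hg.comp hf, fun a b => (hf' a b).trans (hg' _ _)⟩

/-- A permutation is determined by its order pattern. -/
theorem perm_eq_of_lt_iff {n : ℕ} {σ τ : Perm (Fin n)}
    (h : ∀ a b, a < b → (σ a < σ b ↔ τ a < τ b)) : σ = τ := by
  have h' : ∀ a b, σ a < σ b ↔ τ a < τ b := by
    intro a b
    rcases lt_trichotomy a b with hab | rfl | hab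
    · exact h a b hab
    · simp
    · have := h b a hab
      have h₁ := σ.injective.ne hab.ne
      have h₂ := τ.injective.ne hab.ne
      rw [← not_iff_not, not_lt, not_lt, h₁.le_iff_lt, h₂.le_iff_lt, this]
  have hm : StrictMono (σ ∘ τ.symm) := fun a b hab => by
    simpa [h'] using hab
  have := StrictMono.range_inj hm strictMono_id |>.1 (by simp [Set.range_comp])
  ext a
  simpa using congrArg Fin.val (congrFun this (τ a))

/-- Every injective sequence has an order pattern. -/
theorem exists_perm_lt_iff {k n : ℕ} (g : Fin k → Fin n) (hg : Function.Injective g) :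
    ∃ σ : Perm (Fin k), ∀ a b, σ a < σ b ↔ g a < g b := by
  have hm : StrictMono (g ∘ Tuple.sort g) :=
    (Tuple.monotone_sort g).strictMono_of_injective (hg.comp (Tuple.sort g).injective)
  refine ⟨(Tuple.sort g).symm, fun a b => ?_⟩
  rw [← hm.lt_iff_lt]
  simp

/-- Erdős–Szekeres, in Ramsey form. -/
theorem exists_strictMonoOn_or_strictAntiOn {n : ℕ} (π : Perm (Fin n)) (a b : ℕ)
    (A : Finset (Fin n)) (hA : 2 ^ (a + b) ≤ A.card) :
    (∃ S ⊆ A, a ≤ S.card ∧ StrictMonoOn π S) ∨ (∃ S ⊆ A, b ≤ S.card ∧ StrictAntiOn π S) := by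
  induction hab : a + b generalizing a b A with
  | zero => exact Or.inl ⟨∅, by simp, by omega, by simp [StrictMonoOn]⟩
  | succ t ih =>
    rcases Nat.eq_zero_or_pos a with rfl | ha
    · exact Or.inl ⟨∅, by simp, by simp, by simp [StrictMonoOn]⟩
    rcases Nat.eq_zero_or_pos b with rfl | hb
    · exact Or.inr ⟨∅, by simp, by simp, by simp [StrictAntiOn]⟩
    rw [hab, pow_succ] at hA
    have hne : A.Nonempty := Finset.card_pos.1 (by have := Nat.two_pow_pos t; omega)
    obtain ⟨x, hx, hmin⟩ : ∃ x ∈ A, ∀ y ∈ A, x ≤ y :=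
      ⟨A.min' hne, A.min'_mem hne, fun y hy => A.min'_le y hy⟩
    have hcard := Finset.card_filter_add_card_filter_not (s := A.erase x) (fun y => π x < π y)
    rw [Finset.card_erase_of_mem hx] at hcard
    have hlt : ∀ y ∈ A.erase x, x < y := fun y hy =>
      lt_of_le_of_ne (hmin y (Finset.mem_of_mem_erase hy)) (Finset.ne_of_mem_erase hy).symm
    have hpos := Nat.two_pow_pos t
    rcases le_or_gt (2 ^ t) ((A.erase x).filter (fun y => π x < π y)).card with hU | hD
    · rcases ih (a - 1) b _ (by rwa [show a - 1 + b = t by omega]) (by omega) with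
        ⟨S, hS, hSc, hSm⟩ | ⟨S, hS, hSc, hSm⟩
      · have hS' : ∀ y ∈ S, y ∈ A.erase x ∧ π x < π y := fun y hy => by simpa using hS hy
        refine Or.inl ⟨insert x S, ?_, ?_, ?_⟩
        · exact Finset.insert_subset hx fun y hy => Finset.mem_of_mem_erase (hS' y hy).1
        · rw [Finset.card_insert_of_notMem fun h => by simpa using (hS' x h).1]
          omega
        · intro y hy z hz hyz
          simp only [Finset.coe_insert, Set.mem_insert_iff, Finset.mem_coe] at hy hz
          rcases hy with rfl | hy <;> rcases hz with rfl | hz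
          · exact absurd hyz (lt_irrefl _)
          · exact (hS' z hz).2
          · exact absurd hyz (hlt y (hS' y hy).1).not_gt
          · exact hSm hy hz hyz
      · exact Or.inr ⟨S, hS.trans ((Finset.filter_subset _ _).trans (Finset.erase_subset _ _)),
          hSc, hSm⟩
    · have hD' : 2 ^ t ≤ ((A.erase x).filter (fun y => ¬ π x < π y)).card := by omega
      rcases ih a (b - 1) _ (by rwa [show a + (b - 1) = t by omega]) (by omega) with
        ⟨S, hS, hSc, hSm⟩ | ⟨S, hS, hSc, hSm⟩
      · exact Or.inl ⟨S, hS.trans ((Finset.filter_subset _ _).trans (Finset.erase_subset _ _)),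
          hSc, hSm⟩
      · have hS' : ∀ y ∈ S, y ∈ A.erase x ∧ π y < π x := fun y hy => by
          have := Finset.mem_filter.1 (hS hy)
          exact ⟨this.1, lt_of_le_of_ne (not_lt.1 this.2)
            (π.injective.ne (Finset.ne_of_mem_erase this.1))⟩
        refine Or.inr ⟨insert x S, ?_, ?_, ?_⟩
        · exact Finset.insert_subset hx fun y hy => Finset.mem_of_mem_erase (hS' y hy).1
        · rw [Finset.card_insert_of_notMem fun h => by simpa using (hS' x h).1]
          omega
        · intro y hy z hz hyz
          simp only [Finset.coe_insert, Set.mem_insert_iff, Finset.mem_coe] at hy hz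
          rcases hy with rfl | hy <;> rcases hz with rfl | hz
          · exact absurd hyz (lt_irrefl _)
          · exact (hS' z hz).2
          · exact absurd hyz (hlt y (hS' y hy).1).not_gt
          · exact hSm hy hz hyz

/-- The permutation moving `i` to `j` and keeping the order of the other elements. -/
def moveTo {m : ℕ} (i j : Fin (m + 1)) : Perm (Fin (m + 1)) :=
  (finSuccEquiv' i).trans (finSuccEquiv' j).symm

theorem moveTo_self {m : ℕ} (i j : Fin (m + 1)) : moveTo i j i = j := by
  simp [moveTo]

theorem moveTo_succAbove {m : ℕ} (i j : Fin (m + 1)) (k : Fin m) :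
    moveTo i j (i.succAbove k) = j.succAbove k := by
  simp [moveTo]

theorem moveTo_inv {m : ℕ} (i j : Fin (m + 1)) : (moveTo i j)⁻¹ = moveTo j i := rfl

theorem moveTo_val {m : ℕ} (i j a : Fin (m + 1)) :
    (a = i ∧ (moveTo i j a : ℕ) = j) ∨
    (a.val < i.val ∧ a.val < j.val ∧ (moveTo i j a : ℕ) = a) ∨
    (a.val < i.val ∧ j.val ≤ a.val ∧ (moveTo i j a : ℕ) = a + 1) ∨
    (i.val < a.val ∧ a.val ≤ j.val ∧ (moveTo i j a : ℕ) + 1 = a) ∨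
    (i.val < a.val ∧ j.val < a.val ∧ (moveTo i j a : ℕ) = a) := by
  rcases Fin.eq_self_or_eq_succAbove i a with rfl | ⟨k, rfl⟩
  · simp [moveTo_self]
  · rw [moveTo_succAbove]
    simp only [Fin.succAbove, Fin.lt_def, Fin.ext_iff]
    split_ifs <;> simp at * <;> omega

/-- Deleting one element from `moveTo i j` gives `moveTo i' j'`. -/
theorem permContains_moveTo {m : ℕ} {i j : Fin (m + 2)} {i' j' : Fin (m + 1)}
    (q : Fin (m + 2)) (hi : i = q.succAbove i')
    (hj : j = (moveTo i j q).succAbove j') :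
    PermContains (moveTo i' j') (moveTo i j) := by
  refine ⟨q.succAbove, Fin.strictMono_succAbove q, fun a b => ?_⟩
  have key : ∀ a, moveTo i j (q.succAbove a) = (moveTo i j q).succAbove (moveTo i' j' a) := by
    intro a
    have h1 := moveTo_val i j q
    have h2 := moveTo_val i j (q.succAbove a)
    have h3 := moveTo_val i' j' a
    simp only [Fin.succAbove, Fin.lt_def, Fin.ext_iff] at *
    split_ifs at * <;> simp at * <;> omega
  rw [key, key, (Fin.strictMono_succAbove _).lt_iff_lt]

/-- A downward closed class of permutations whose members of size at least `N` commute and have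
orders dividing a common number below `N`. -/
structure IsAbelianClass (C : ∀ n, Set (Perm (Fin n))) (N : ℕ) : Prop where
  closed : ∀ {k n : ℕ} {τ : Perm (Fin k)} {π : Perm (Fin n)}, PermContains τ π → π ∈ C n → τ ∈ C k
  comm : ∀ {n : ℕ}, N ≤ n → ∀ {σ τ : Perm (Fin n)}, σ ∈ C n → τ ∈ C n → σ * τ = τ * σ
  pow : ∃ g, 0 < g ∧ g < N ∧ ∀ {n : ℕ}, N ≤ n → ∀ {σ : Perm (Fin n)}, σ ∈ C n → σ ^ g = 1

theorem apply_apply_of_fixed {α : Type*} {σ τ : Perm α} (h : σ * τ = τ * σ) {x : α}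
    (hx : σ x = x) : σ (τ x) = τ x := by
  rw [← Perm.mul_apply, h, Perm.mul_apply, hx]

theorem moveTo_last_zero_pow {m : ℕ} (g : ℕ) (hg : g ≤ m) :
    ((moveTo (Fin.last m) 0 ^ g) 0).val = g := by
  induction g with
  | zero => simp
  | succ g ih =>
    rw [pow_succ', Perm.mul_apply]
    have h1 := ih (by omega)
    have h2 := moveTo_val (Fin.last m) 0 ((moveTo (Fin.last m) 0 ^ g) 0)
    simp only [Fin.ext_iff, Fin.val_last, Fin.val_zero] at h2
    omega

theorem IsAbelianClass.moveTo_zero_last_notMem {C : ∀ n, Set (Perm (Fin n))} {N m : ℕ}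
    (hC : IsAbelianClass C N) (hm : N ≤ m) {i j : Fin (m + 1)} (h : moveTo i j ∈ C (m + 1)) :
    ¬ (i.val = 0 ∧ j.val = m) ∧ ¬ (i.val = m ∧ j.val = 0) := by
  obtain ⟨g, hg, hgN, hpow⟩ := hC.pow
  have hp := hpow (by omega) h
  have key := moveTo_last_zero_pow (m := m) g (by omega)
  constructor
  · rintro ⟨hi, hj⟩
    obtain rfl : i = 0 := Fin.ext hi
    obtain rfl : j = Fin.last m := Fin.ext hj
    rw [← moveTo_inv, inv_pow, inv_eq_one] at hp
    rw [hp] at key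
    simp at key
    omega
  · rintro ⟨hi, hj⟩
    obtain rfl : i = Fin.last m := Fin.ext hi
    obtain rfl : j = 0 := Fin.ext hj
    rw [hp] at key
    simp at key
    omega

theorem permContains_moveTo_of_val {m : ℕ} {i j : Fin (m + 2)} {i' j' : Fin (m + 1)}
    (q : Fin (m + 2))
    (hi : (q.val < i.val ∧ i'.val + 1 = i.val) ∨ (i.val < q.val ∧ i'.val = i.val))
    (hj : ((moveTo i j q).val < j.val ∧ j'.val + 1 = j.val) ∨
      (j.val < (moveTo i j q).val ∧ j'.val = j.val)) :
    PermContains (moveTo i' j') (moveTo i j) := by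
  refine permContains_moveTo q ?_ ?_
  · simp only [Fin.succAbove, Fin.lt_def, Fin.ext_iff]
    split_ifs at * <;> simp at * <;> omega
  · simp only [Fin.succAbove, Fin.lt_def, Fin.ext_iff]
    split_ifs at * <;> simp at * <;> omega

/-- In an abelian class, the only nontrivial insertions of a point into a long increasing sequence
are adjacent transpositions at one of the two ends. -/
theorem IsAbelianClass.moveTo_cases {C : ∀ n, Set (Perm (Fin n))} {N k : ℕ}
    (hC : IsAbelianClass C N) (hk : N ≤ k + 1) (hk2 : 2 ≤ k) {i j : Fin (k + 2)}
    (h : moveTo i j ∈ C (k + 2)) :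
    i = j ∨ (i.val ≤ 1 ∧ j.val ≤ 1) ∨ (k ≤ i.val ∧ k ≤ j.val) := by
  have hcyc := hC.moveTo_zero_last_notMem hk h
  by_contra hcon
  rw [Fin.ext_iff] at hcon
  let P : ℕ → ℕ → Prop := fun a b => ∃ (ha : a < k + 1) (hb : b < k + 1),
    moveTo (⟨a, ha⟩ : Fin (k + 1)) ⟨b, hb⟩ ∈ C (k + 1)
  -- `moveTo a b` moves every point of the interval between `a` and `b`, and fixes all others
  have contra : ∀ {a b c d : ℕ} (x y : ℕ), P a b → P c d → a ≠ b → x < k + 1 →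
      ((x < a ∧ x < b) ∨ (a < x ∧ b < x)) → ((a ≤ y ∧ y ≤ b) ∨ (b ≤ y ∧ y ≤ a)) →
      ((x = c ∧ y = d) ∨ (c < x ∧ x ≤ d ∧ y + 1 = x) ∨ (x < c ∧ d ≤ x ∧ y = x + 1)) → False := by
    rintro a b c d x y ⟨ha, hb, h₁⟩ ⟨hc, hd, h₂⟩ hab hx hxab hyab hxy
    have h3 := moveTo_val (⟨c, hc⟩ : Fin (k + 1)) ⟨d, hd⟩ ⟨x, hx⟩
    have h4 := moveTo_val (⟨a, ha⟩ : Fin (k + 1)) ⟨b, hb⟩ ⟨x, hx⟩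
    have h5 := moveTo_val (⟨a, ha⟩ : Fin (k + 1)) ⟨b, hb⟩ (moveTo ⟨c, hc⟩ ⟨d, hd⟩ ⟨x, hx⟩)
    have h6 : moveTo (⟨a, ha⟩ : Fin (k + 1)) ⟨b, hb⟩ ⟨x, hx⟩ = ⟨x, hx⟩ := by
      simp only [Fin.ext_iff] at h4 ⊢
      omega
    have h7 := congrArg Fin.val (apply_apply_of_fixed (hC.comm hk h₁ h₂) h6)
    simp only [Fin.ext_iff] at h3 h5
    omega
  have hdel : ∀ {a b : ℕ} (q : ℕ) (hq : q < k + 2), a < k + 1 → b < k + 1 →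
      ((q < i.val ∧ a + 1 = i.val) ∨ (i.val < q ∧ a = i.val)) →
      (((moveTo i j ⟨q, hq⟩).val < j.val ∧ b + 1 = j.val) ∨
        (j.val < (moveTo i j ⟨q, hq⟩).val ∧ b = j.val)) → P a b :=
    fun q hq ha hb h1 h2 => ⟨ha, hb, hC.closed (permContains_moveTo_of_val ⟨q, hq⟩ h1 h2) h⟩
  have hval : ∀ (q : ℕ) (hq : q < k + 2), _ := fun q hq => moveTo_val i j ⟨q, hq⟩
  simp only [Fin.ext_iff] at hval
  have hfirst : 0 < i.val → 0 < j.val → P (i.val - 1) (j.val - 1) := by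
    intro hi hj
    have := hval 0 (by omega)
    apply hdel 0 <;> omega
  have hlast : i.val < k + 1 → j.val < k + 1 → P i.val j.val := by
    intro hi hj
    have := hval (k + 1) (by omega)
    apply hdel (k + 1) <;> omega
  have hup : i.val < j.val → P i.val (j.val - 1) := by
    intro hij
    have := hval (i.val + 1) (by omega)
    apply hdel (i.val + 1) <;> omega
  have hdown : j.val < i.val → P (i.val - 1) j.val := by
    intro hij
    have := hval (i.val - 1) (by omega)
    apply hdel (i.val - 1) <;> omega
  clear hdel hval
  rcases lt_or_ge i.val j.val with hij | hij
  · by_cases hmin : i.val = 0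
    · apply contra j.val (j.val - 1) (hup hij) (hlast (by omega) (by omega)) <;> omega
    by_cases hmax : j.val = k + 1
    · apply contra (i.val - 1) (j.val - 1) (hup hij) (hfirst (by omega) (by omega)) <;> omega
    · apply contra (i.val - 1) (j.val - 1) (hlast (by omega) (by omega))
        (hfirst (by omega) (by omega)) <;> omega
  · have hji : j.val < i.val := by omega
    by_cases hmin : j.val = 0
    · apply contra i.val j.val (hdown hji) (hlast (by omega) (by omega)) <;> omega
    by_cases hmax : i.val = k + 1
    · apply contra (j.val - 1) j.val (hdown hji) (hfirst (by omega) (by omega)) <;> omega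
    · apply contra (j.val - 1) j.val (hlast (by omega) (by omega))
        (hfirst (by omega) (by omega)) <;> omega

/-- The positions `a` and `b` form an inversion of `π`. -/
def IsInversion {n : ℕ} (π : Perm (Fin n)) (a b : Fin n) : Prop :=
  (a < b ∧ π b < π a) ∨ (b < a ∧ π a < π b)

theorem IsInversion.symm {n : ℕ} {π : Perm (Fin n)} {a b : Fin n} (h : IsInversion π a b) :
    IsInversion π b a := Or.symm h

theorem not_isInversion_of_strictMonoOn {n : ℕ} {π : Perm (Fin n)} {S : Finset (Fin n)}
    (hS : StrictMonoOn π S) {a b : Fin n} (ha : a ∈ S) (hb : b ∈ S) : ¬ IsInversion π a b := by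
  rintro (⟨h₁, h₂⟩ | ⟨h₁, h₂⟩)
  · exact (hS ha hb h₁).not_gt h₂
  · exact (hS hb ha h₁).not_gt h₂

theorem strictMonoOn_insert {n : ℕ} {π : Perm (Fin n)} {S : Finset (Fin n)}
    (hS : StrictMonoOn π S) {p : Fin n} (hp : ∀ s ∈ S, ¬ IsInversion π p s) :
    StrictMonoOn π (insert p S : Finset (Fin n)) := by
  intro a ha b hb hab
  simp only [Finset.coe_insert, Set.mem_insert_iff, Finset.mem_coe] at ha hb
  rcases ha with rfl | ha <;> rcases hb with rfl | hb
  · exact absurd hab (lt_irrefl _)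
  · exact lt_of_le_of_ne (not_lt.1 fun h => hp b hb (Or.inl ⟨hab, h⟩)) (π.injective.ne hab.ne)
  · exact lt_of_le_of_ne (not_lt.1 fun h => hp a ha (Or.inr ⟨hab, h⟩)) (π.injective.ne hab.ne)
  · exact hS ha hb hab

theorem eq_moveTo_of_strictMono {m : ℕ} {σ : Perm (Fin (m + 1))} {i : Fin (m + 1)}
    (h : StrictMono (σ ∘ i.succAbove)) : σ = moveTo i (σ i) := by
  have key := (StrictMono.range_inj h (Fin.strictMono_succAbove (σ i))).1 (by
    rw [Set.range_comp, Fin.range_succAbove, Fin.range_succAbove,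
      Set.image_compl_eq σ.bijective, Set.image_singleton])
  ext a
  rcases Fin.eq_self_or_eq_succAbove i a with rfl | ⟨k, rfl⟩
  · rw [moveTo_self]
  · rw [moveTo_succAbove, ← key, Function.comp_apply]

/-- The pattern of `π` on the positions in a finite set. -/
theorem exists_pattern_on {n m : ℕ} (π : Perm (Fin n)) {S : Finset (Fin n)} (hS : S.card = m) :
    ∃ σ : Perm (Fin m), PermContains σ π ∧
      ∀ a b, σ a < σ b ↔ π (S.orderEmbOfFin hS a) < π (S.orderEmbOfFin hS b) := by
  obtain ⟨σ, hσ⟩ := exists_perm_lt_iff (fun a => π (S.orderEmbOfFin hS a))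
    (π.injective.comp (S.orderEmbOfFin hS).injective)
  exact ⟨σ, ⟨S.orderEmbOfFin hS, (S.orderEmbOfFin hS).strictMono, hσ⟩, hσ⟩

theorem exists_orderEmbOfFin_eq {n m : ℕ} {S : Finset (Fin n)} (hS : S.card = m) {x : Fin n}
    (hx : x ∈ S) : ∃ a, S.orderEmbOfFin hS a = x := by
  have := Finset.range_orderEmbOfFin S hS
  rw [← Finset.mem_coe, ← this] at hx
  exact hx

theorem IsAbelianClass.isInversion_extreme {C : ∀ n, Set (Perm (Fin n))} {N n : ℕ}
    (hC : IsAbelianClass C N) {π : Perm (Fin n)} (hπ : π ∈ C n) {S : Finset (Fin n)}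
    (hS : StrictMonoOn π S) (hN : N + 3 ≤ S.card) {p x : Fin n} (hx : x ∈ S)
    (hpx : IsInversion π p x) :
    ((∀ y ∈ S, x ≤ y) ∨ (∀ y ∈ S, y ≤ x)) ∧ ∀ y ∈ S, y ≠ x → ¬ IsInversion π p y := by
  have hp : p ∉ S := fun hp => not_isInversion_of_strictMonoOn hS hp hx hpx
  obtain ⟨k, hk⟩ : ∃ k, S.card = k + 1 := ⟨S.card - 1, by omega⟩
  have hcard : (insert p S).card = k + 2 := by rw [Finset.card_insert_of_notMem hp, hk]
  obtain ⟨σ, hσC, hσ⟩ := exists_pattern_on π hcard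
  set f := (insert p S).orderEmbOfFin hcard
  obtain ⟨i, hi⟩ := exists_orderEmbOfFin_eq hcard (Finset.mem_insert_self p S)
  have hfS : ∀ a, a ≠ i → f a ∈ S := fun a ha =>
    (Finset.mem_insert.1 ((insert p S).orderEmbOfFin_mem hcard a)).resolve_left
      fun h => ha (f.injective (h.trans hi.symm))
  have hσm : StrictMono (σ ∘ i.succAbove) := fun a b hab => by
    rw [Function.comp_apply, Function.comp_apply, hσ]
    exact hS (hfS _ (Fin.succAbove_ne i a)) (hfS _ (Fin.succAbove_ne i b))
      (f.strictMono (Fin.strictMono_succAbove i hab))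
  have hmem := hC.closed hσC hπ
  rw [eq_moveTo_of_strictMono hσm] at hmem hσ
  set j := σ i
  have hcases := hC.moveTo_cases (by omega) (by omega) hmem
  have hinv : ∀ a, IsInversion π p (f a) →
      (i < a ∧ moveTo i j a < moveTo i j i) ∨ (a < i ∧ moveTo i j i < moveTo i j a) := by
    intro a ha
    rw [hσ, hσ, ← f.lt_iff_lt, ← f.lt_iff_lt]
    change _ ∨ _ at ha
    rw [← hi] at ha
    exact ha
  have hex : ∀ y ∈ insert p S, ∃ a, f a = y := fun y hy => exists_orderEmbOfFin_eq hcard hy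
  obtain ⟨a, rfl⟩ := hex x (Finset.mem_insert_of_mem hx)
  have h1 := hinv a hpx
  have h2 := moveTo_val i j a
  rw [moveTo_self] at hinv h1
  simp only [Fin.lt_def, Fin.ext_iff] at h1 h2 hcases
  constructor
  · have : (i.val ≤ 1 ∧ j.val ≤ 1) ∨ (k ≤ i.val ∧ k ≤ j.val) := by omega
    refine this.imp (fun h y hy => ?_) (fun h y hy => ?_) <;>
    · obtain ⟨b, rfl⟩ := hex y (Finset.mem_insert_of_mem hy)
      have hb : b ≠ i := by rintro rfl; exact hp (hi ▸ hy)
      rw [f.le_iff_le, Fin.le_def]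
      rw [ne_eq, Fin.ext_iff] at hb
      omega
  · intro y hy hyx hinvy
    obtain ⟨b, rfl⟩ := hex y (Finset.mem_insert_of_mem hy)
    have h3 := hinv b hinvy
    have h4 := moveTo_val i j b
    have hba : b ≠ a := fun h => hyx (by rw [h])
    simp only [Fin.lt_def, Fin.ext_iff, ne_eq] at h3 h4 hba
    omega

theorem swap_zero_two_val {m : ℕ} (a : Fin (m + 3)) :
    (a.val = 0 ∧ (swap 0 2 a).val = 2) ∨ (a.val = 1 ∧ (swap 0 2 a).val = 1) ∨
    (a.val = 2 ∧ (swap 0 2 a).val = 0) ∨ (3 ≤ a.val ∧ (swap 0 2 a).val = a.val) := by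
  rw [swap_apply_def]
  have h2 : (2 : Fin (m + 3)).val = 2 := rfl
  simp only [Fin.ext_iff, h2, Fin.val_zero]
  split_ifs <;> (try rw [h2]) <;> (try rw [Fin.val_zero]) <;> omega

theorem IsAbelianClass.swap_zero_two_notMem {C : ∀ n, Set (Perm (Fin n))} {N m : ℕ}
    (hC : IsAbelianClass C N) (hm : N ≤ m + 3) : swap (0 : Fin (m + 4)) 2 ∉ C (m + 4) := by
  intro h
  have h₁ : PermContains (swap (0 : Fin (m + 3)) 2) (swap (0 : Fin (m + 4)) 2) := by
    refine ⟨Fin.castSucc, Fin.strictMono_castSucc, fun a b => ?_⟩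
    have ha := swap_zero_two_val a
    have hb := swap_zero_two_val b
    have ha' := swap_zero_two_val a.castSucc
    have hb' := swap_zero_two_val b.castSucc
    simp only [Fin.val_castSucc] at ha' hb'
    rw [Fin.lt_def, Fin.lt_def]
    omega
  have h₂ : PermContains (moveTo (0 : Fin (m + 3)) 1) (swap (0 : Fin (m + 4)) 2) := by
    refine ⟨Fin.succ, Fin.strictMono_succ, fun a b => ?_⟩
    have ha := moveTo_val 0 1 a
    have hb := moveTo_val 0 1 b
    have ha' := swap_zero_two_val a.succ
    have hb' := swap_zero_two_val b.succ
    simp only [Fin.val_succ, Fin.ext_iff, Fin.val_zero, Fin.val_one] at ha hb ha' hb'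
    rw [Fin.lt_def, Fin.lt_def]
    omega
  have hc := hC.comm hm (hC.closed h₂ h) (hC.closed h₁ h)
  have h3 := congrArg Fin.val (apply_apply_of_fixed hc (x := 2) (by
    have := moveTo_val 0 1 (2 : Fin (m + 3))
    have e : (2 : Fin (m + 3)).val = 2 := rfl
    simp only [Fin.ext_iff, Fin.val_zero, Fin.val_one, e] at this ⊢
    omega))
  rw [swap_apply_right, moveTo_self] at h3
  simp at h3

theorem permContains_swap_zero_two {n m : ℕ} {π : Perm (Fin n)} {S : Finset (Fin n)}
    (hS : StrictMonoOn π S) (hcard : S.card = m) {a b c : Fin n} (hab : a < b) (hbc : b < c)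
    (hab' : π b < π a) (hbc' : π c < π b) (hcS : ∀ s ∈ S, c < s) (haS : ∀ s ∈ S, π a < π s) :
    PermContains (swap (0 : Fin (m + 3)) 2) π := by
  have hg : ∀ k, S.orderEmbOfFin hcard k ∈ S := S.orderEmbOfFin_mem hcard
  set g := S.orderEmbOfFin hcard
  have hg1 : ∀ k, c < g k := fun k => hcS _ (hg k)
  have hg2 : ∀ k, π a < π (g k) := fun k => haS _ (hg k)
  have hg3 : ∀ k l, π (g k) < π (g l) ↔ k < l := fun k l =>
    (hS.lt_iff_lt (hg k) (hg l)).trans g.lt_iff_lt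
  let f : Fin (m + 3) → Fin n := fun k => if k.val = 0 then a else if k.val = 1 then b else
    if h : k.val < 3 then c else g ⟨k.val - 3, by omega⟩
  have hf : ∀ k : Fin (m + 3), (k.val = 0 ∧ f k = a) ∨ (k.val = 1 ∧ f k = b) ∨
      (k.val = 2 ∧ f k = c) ∨ (∃ l : Fin m, k.val = l.val + 3 ∧ f k = g l) := by
    intro k
    simp only [f]
    split_ifs with h0 h1 h2
    · simp [h0]
    · simp [h1]
    · right; right; left; exact ⟨by omega, rfl⟩
    · right; right; right; exact ⟨_, by simp; omega, rfl⟩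
  have hab'' := hab.trans hbc
  have hac := hbc'.trans hab'
  refine ⟨f, fun k l hkl => ?_, fun k l => ?_⟩
  · rw [Fin.lt_def] at hkl
    rcases hf k with ⟨h, e⟩ | ⟨h, e⟩ | ⟨h, e⟩ | ⟨u, h, e⟩ <;>
    rcases hf l with ⟨h', e'⟩ | ⟨h', e'⟩ | ⟨h', e'⟩ | ⟨v, h', e'⟩ <;> rw [e, e'] <;>
    first
    | omega
    | assumption
    | skip
    · exact hab''.trans (hg1 v)
    · exact hbc.trans (hg1 v)
    · exact hg1 v
    · exact g.strictMono (Fin.lt_def.2 (by omega))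
  · have h1 := swap_zero_two_val k
    have h2 := swap_zero_two_val l
    rw [Fin.lt_def]
    rcases hf k with ⟨h, e⟩ | ⟨h, e⟩ | ⟨h, e⟩ | ⟨u, h, e⟩ <;>
    rcases hf l with ⟨h', e'⟩ | ⟨h', e'⟩ | ⟨h', e'⟩ | ⟨v, h', e'⟩ <;> rw [e, e']
    case inr.inr.inr.inr.inr.inr =>
      rw [hg3, Fin.lt_def]
      omega
    all_goals
      try have := hg2 u
      try have := hg2 v
      rw [Fin.lt_def] at *
      omega

section Increasing

variable {C : ∀ n, Set (Perm (Fin n))} {N n : ℕ} {π : Perm (Fin n)} {S : Finset (Fin n)}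

/-- An inversion lying below a long increasing sequence occupies the first two positions. -/
theorem IsAbelianClass.lt_of_inversion_below (hC : IsAbelianClass C N) (hπ : π ∈ C n)
    (hS : StrictMonoOn π S) (hN : N + 3 ≤ S.card) (hcomp : ∀ p, ∀ s ∈ S, ¬ IsInversion π p s)
    {x y : Fin n} (hxy : x < y) (hxy' : π y < π x) (hxS : ∀ s ∈ S, x ≤ s) {z : Fin n}
    (hzx : z ≠ x) (hzy : z ≠ y) : x < z ∧ y < z := by
  obtain ⟨s₀, hs₀⟩ : S.Nonempty := Finset.card_pos.1 (by omega)
  have hinv : IsInversion π x y := Or.inl ⟨hxy, hxy'⟩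
  have hcard : ∀ p, N + 3 ≤ (insert p S).card := fun p =>
    hN.trans (Finset.card_le_card (Finset.subset_insert p S))
  have hcard₂ : ∀ p q, N + 3 ≤ (insert q (insert p S)).card := fun p q =>
    (hcard p).trans (Finset.card_le_card (Finset.subset_insert q _))
  have hmono : ∀ p, StrictMonoOn π (insert p S : Finset (Fin n)) := fun p =>
    strictMonoOn_insert hS (hcomp p)
  have hmono₂ : ∀ p q, ¬ IsInversion π q p →
      StrictMonoOn π (insert q (insert p S) : Finset (Fin n)) := fun p q h =>
    strictMonoOn_insert (hmono p) fun s hs => by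
      rcases Finset.mem_insert.1 hs with rfl | hs
      · exact h
      · exact hcomp q s hs
  have hval : ∀ {p}, ∀ s ∈ S, p < s → π p < π s := fun {p} s hs h =>
    lt_of_le_of_ne (not_lt.1 fun h' => hcomp p s hs (Or.inl ⟨h, h'⟩)) (π.injective.ne h.ne)
  have hxS' : ∀ s ∈ S, x < s := fun s hs =>
    lt_of_le_of_ne (hxS s hs) (by rintro rfl; exact hcomp y x hs hinv.symm)
  -- a point inverted with one below `S` is itself below `S`
  have hbelow : ∀ {p q}, (∀ s ∈ S, p < s) → IsInversion π p q → ∀ s ∈ S, q < s := by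
    intro p q hp hpq
    have hqS : q ∉ S := fun h => hcomp p q h hpq
    rcases (hC.isInversion_extreme hπ (hmono q) (hcard q) (Finset.mem_insert_self q S) hpq).1 with
      h | h
    · exact fun s hs => lt_of_le_of_ne (h s (Finset.mem_insert_of_mem hs))
        (by rintro rfl; exact hqS hs)
    · have h1 : s₀ < q := lt_of_le_of_ne (h s₀ (Finset.mem_insert_of_mem hs₀))
        (by rintro rfl; exact hqS hs₀)
      have h2 := hval s₀ hs₀ (hp s₀ hs₀)
      have h3 : π s₀ < π q := lt_of_le_of_ne
        (not_lt.1 fun h' => hcomp q s₀ hs₀ (Or.inr ⟨h1, h'⟩)) (π.injective.ne h1.ne)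
      rcases hpq with ⟨_, h4⟩ | ⟨h4, _⟩
      · exact absurd (h2.trans h3) h4.not_gt
      · exact absurd ((hp s₀ hs₀).trans h1) h4.not_gt
  have hyS' := hbelow hxS' hinv
  -- a point compatible with one end of the inversion is above it and compatible with the other
  have hside : ∀ {p q}, (∀ s ∈ S, p < s) → IsInversion π q p → z ≠ p → ¬ IsInversion π z p →
      p < z ∧ ¬ IsInversion π z q := by
    intro p q hp hqp hzp hnz
    have hT := hC.isInversion_extreme hπ (hmono₂ p z hnz) (hcard₂ p z)
      (Finset.mem_insert_of_mem (Finset.mem_insert_self p S)) hqp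
    refine ⟨?_, fun h => hT.2 z (Finset.mem_insert_self _ _) hzp h.symm⟩
    rcases hT.1 with h | h
    · exact lt_of_le_of_ne (h z (Finset.mem_insert_self _ _)) hzp.symm
    · exact absurd (hp s₀ hs₀)
        (h s₀ (Finset.mem_insert_of_mem (Finset.mem_insert_of_mem hs₀))).not_gt
  by_cases hx : IsInversion π z x
  · by_cases hy : IsInversion π z y
    · exfalso
      have hzS' := hbelow hxS' hx.symm
      obtain ⟨m, hm⟩ : ∃ m, S.card = m + 1 := ⟨S.card - 1, by omega⟩
      have hbad : ∀ {a b c}, a < b → b < c → π b < π a → π c < π b →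
          (∀ s ∈ S, a < s) → (∀ s ∈ S, c < s) → False := fun hab hbc hab' hbc' ha hc =>
        hC.swap_zero_two_notMem (m := m) (by omega) (hC.closed
          (permContains_swap_zero_two hS hm hab hbc hab' hbc' hc fun s hs => hval s hs (ha s hs)) hπ)
      rcases hx with ⟨h1, h2⟩ | ⟨h1, h2⟩
      · exact hbad h1 hxy h2 hxy' hzS' hyS'
      · rcases hy with ⟨h3, h4⟩ | ⟨h3, h4⟩
        · exact hbad h1 h3 h2 h4 hxS' hyS'
        · exact hbad hxy h3 hxy' h4 hxS' hzS'
    · exact absurd hx (hside hyS' hinv hzy hy).2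
  · have h1 := hside hxS' hinv.symm hzx hx
    exact ⟨h1.1, (hside hyS' hinv hzy h1.2).1⟩

end Increasing

/-- Conjugation by the order reversal. -/
def revConj {n : ℕ} (π : Perm (Fin n)) : Perm (Fin n) := Fin.revPerm * π * Fin.revPerm

theorem revConj_apply {n : ℕ} (π : Perm (Fin n)) (a : Fin n) :
    revConj π a = (π a.rev).rev := rfl

theorem revConj_mul {n : ℕ} (σ τ : Perm (Fin n)) : revConj (σ * τ) = revConj σ * revConj τ := by
  ext a
  simp [revConj_apply]

theorem revConj_injective {n : ℕ} : Function.Injective (revConj : Perm (Fin n) → _) := by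
  intro σ τ h
  ext a
  have := congrArg (fun ρ : Perm (Fin n) => ρ a.rev) h
  simpa [revConj_apply, Fin.ext_iff] using congrArg Fin.rev this

theorem revConj_revConj {n : ℕ} (π : Perm (Fin n)) : revConj (revConj π) = π := by
  ext a
  simp [revConj_apply]

theorem PermContains.revConj {k n : ℕ} {τ : Perm (Fin k)} {π : Perm (Fin n)}
    (h : PermContains τ π) : PermContains (revConj τ) (revConj π) := by
  obtain ⟨f, hf, hf'⟩ := h
  refine ⟨fun a => (f a.rev).rev, fun a b hab => ?_, fun a b => ?_⟩
  · exact Fin.rev_lt_rev.2 (hf (Fin.rev_lt_rev.2 hab))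
  · simp [revConj_apply, hf']

theorem IsAbelianClass.revConj {C : ∀ n, Set (Perm (Fin n))} {N : ℕ} (hC : IsAbelianClass C N) :
    IsAbelianClass (fun _ => {π | revConj π ∈ C _}) N where
  closed h hπ := hC.closed h.revConj hπ
  comm hn σ τ hσ hτ := revConj_injective (by
    rw [revConj_mul, revConj_mul]
    exact hC.comm hn hσ hτ)
  pow := by
    obtain ⟨g, hg, hgN, h⟩ := hC.pow
    refine ⟨g, hg, hgN, fun {n} hn σ hσ => revConj_injective ?_⟩
    have hp : ∀ g, _root_.revConj (σ ^ g) = _root_.revConj σ ^ g := fun g => by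
      induction g with
      | zero => ext a; simp [revConj_apply]
      | succ g ih => rw [pow_succ, pow_succ, revConj_mul, ih]
    have h1 : _root_.revConj (1 : Perm (Fin n)) = 1 := hp 0
    rw [hp, h1]
    exact h hn hσ

theorem val_eq_of_forall_lt {n : ℕ} {x y : Fin n} (hxy : x < y)
    (h : ∀ z, z ≠ x → z ≠ y → x < z ∧ y < z) : x.val = 0 ∧ y.val = 1 := by
  have h1 : ∀ z : ℕ, z < n → z ≠ x.val → z ≠ y.val → x.val < z ∧ y.val < z := fun z hz hx hy =>
    h ⟨z, hz⟩ (by rwa [ne_eq, Fin.ext_iff]) (by rwa [ne_eq, Fin.ext_iff])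
  have h2 := h1 0
  have h3 := h1 1
  rw [Fin.lt_def] at hxy
  omega

/-- A member of an abelian class having a long increasing subsequence can only have inversions in
the first two and the last two positions. -/
theorem IsAbelianClass.inversion_of_increasing {C : ∀ n, Set (Perm (Fin n))} {N n : ℕ}
    (hC : IsAbelianClass C N) {π : Perm (Fin n)} (hπ : π ∈ C n) {S₀ : Finset (Fin n)}
    (hS₀ : StrictMonoOn π S₀) (hN : N + 5 ≤ S₀.card) {x y : Fin n} (hxy : x < y)
    (hxy' : π y < π x) : (x.val = 0 ∧ y.val = 1) ∨ (x.val + 2 = n ∧ y.val + 1 = n) := by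
  have hne : S₀.Nonempty := Finset.card_pos.1 (by omega)
  obtain ⟨S, hSS, hcard, hSlo, hShi⟩ : ∃ S ⊆ S₀, N + 3 ≤ S.card ∧
      (∀ s ∈ S, ∃ t ∈ S₀, t < s) ∧ (∀ s ∈ S, ∃ t ∈ S₀, s < t) := by
    refine ⟨(S₀.erase (S₀.min' hne)).erase (S₀.max' hne), ?_, ?_, fun s hs => ?_, fun s hs => ?_⟩
    · exact (Finset.erase_subset _ _).trans (Finset.erase_subset _ _)
    · have h1 := Finset.pred_card_le_card_erase (s := S₀) (a := S₀.min' hne)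
      have h2 := Finset.pred_card_le_card_erase (s := S₀.erase (S₀.min' hne)) (a := S₀.max' hne)
      omega
    · simp only [Finset.mem_erase] at hs
      exact ⟨_, S₀.min'_mem hne, lt_of_le_of_ne (S₀.min'_le s hs.2.2) hs.2.1.symm⟩
    · simp only [Finset.mem_erase] at hs
      exact ⟨_, S₀.max'_mem hne, lt_of_le_of_ne (S₀.le_max' s hs.2.2) hs.1⟩
  have hS : StrictMonoOn π S := hS₀.mono hSS
  have hcomp : ∀ p, ∀ s ∈ S, ¬ IsInversion π p s := by
    intro p s hs hps
    obtain ⟨t, ht, hts⟩ := hSlo s hs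
    obtain ⟨u, hu, hsu⟩ := hShi s hs
    rcases (hC.isInversion_extreme hπ hS₀ (by omega) (hSS hs) hps).1 with h | h
    · exact (h t ht).not_gt hts
    · exact (h u hu).not_gt hsu
  have hinv : IsInversion π y x := Or.inr ⟨hxy, hxy'⟩
  rcases (hC.isInversion_extreme hπ (strictMonoOn_insert hS (hcomp x))
    (hcard.trans (Finset.card_le_card (Finset.subset_insert x S)))
    (Finset.mem_insert_self x S) hinv).1 with h | h
  · exact Or.inl (val_eq_of_forall_lt hxy fun z hzx hzy => hC.lt_of_inversion_below hπ hS hcard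
      hcomp hxy hxy' (fun s hs => h s (Finset.mem_insert_of_mem hs)) hzx hzy)
  · right
    have hmem : ∀ {s}, s ∈ S.map Fin.revPerm.toEmbedding ↔ s.rev ∈ S := by
      intro s
      simp [Finset.mem_map_equiv]
    have key := val_eq_of_forall_lt (Fin.rev_lt_rev.2 hxy) fun z hzx hzy =>
      hC.revConj.lt_of_inversion_below (π := _root_.revConj π)
        (S := S.map Fin.revPerm.toEmbedding) (by simpa [revConj_revConj] using hπ)
        (fun a ha b hb hab => by
          rw [revConj_apply, revConj_apply, Fin.rev_lt_rev]
          exact hS (hmem.1 hb) (hmem.1 ha) (Fin.rev_lt_rev.2 hab))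
        (by rwa [Finset.card_map])
        (fun p s hs hps => hcomp p.rev s.rev (hmem.1 hs) (by
          simpa [IsInversion, revConj_apply, or_comm] using hps))
        (Fin.rev_lt_rev.2 hxy) (by simpa [revConj_apply] using hxy')
        (fun s hs => Fin.rev_le_iff.2 ((h _ (Finset.mem_insert_of_mem (hmem.1 hs))).trans hxy.le))
        hzx hzy
    simp only [Fin.val_rev] at key
    omega

theorem IsAbelianClass.eq_of_revPerm_mul_moveTo_mem {C : ∀ n, Set (Perm (Fin n))} {N k : ℕ}
    (hC : IsAbelianClass C N) (hk : N ≤ k + 1) (hk1 : 1 ≤ k)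
    (hrev : ∀ m, (Fin.revPerm : Perm (Fin m)) ∈ C m) {i j : Fin (k + 2)}
    (h : Fin.revPerm * moveTo i j ∈ C (k + 2)) : i = j := by
  -- commuting with the reversal forces the moved interval to be centred
  have hcentre : ∀ {m : ℕ} {i j : Fin (m + 1)}, N ≤ m + 1 →
      Fin.revPerm * moveTo i j ∈ C (m + 1) → i ≠ j →
      i.val + j.val = m ∧ ∀ x, moveTo i j x.rev = (moveTo i j x).rev := by
    intro m i j hm hmem hij
    have hc : ∀ x, moveTo i j x.rev = (moveTo i j x).rev := by
      intro x
      have := congrArg (fun σ : Perm (Fin (m + 1)) => (σ x).rev) (hC.comm hm hmem (hrev (m + 1)))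
      simpa using this
    refine ⟨?_, hc⟩
    have hfix : ∀ x : ℕ, ∀ hx : x < m + 1, (moveTo i j ⟨x, hx⟩).val = x →
        ∀ y, (hxy : x + y = m) → (moveTo i j ⟨y, by omega⟩).val = y := by
      intro x hx hfx y hxy
      have h1 := congrArg Fin.val (hc ⟨x, hx⟩)
      have h2 : (⟨x, hx⟩ : Fin (m + 1)).rev = ⟨y, by omega⟩ := by
        rw [Fin.ext_iff, Fin.val_rev]
        simp only
        omega
      rw [h2, Fin.val_rev, hfx] at h1
      omega
    rw [ne_eq, Fin.ext_iff] at hij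
    have hv : ∀ x : ℕ, ∀ hx : x < m + 1, _ := fun x hx => moveTo_val i j ⟨x, hx⟩
    simp only [Fin.ext_iff] at hv
    rcases lt_trichotomy (i.val + j.val) m with hlt | heq | hgt
    · have h1 := hfix (m - min i.val j.val) (by omega) (by
        have := hv (m - min i.val j.val) (by omega)
        omega) (min i.val j.val) (by omega)
      have h2 := hv (min i.val j.val) (by omega)
      omega
    · exact heq
    · have h1 := hfix (m - max i.val j.val) (by omega) (by
        have := hv (m - max i.val j.val) (by omega)
        omega) (max i.val j.val) (by omega)
      have h2 := hv (max i.val j.val) (by omega)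
      omega
  by_contra hij
  obtain ⟨hsum, hc⟩ := hcentre (by omega) h hij
  have h0 := moveTo_val i j 0
  have hl := moveTo_val i j (Fin.last _)
  have hc0 := congrArg Fin.val (hc 0)
  rw [Fin.rev_zero, Fin.val_rev] at hc0
  rw [Fin.ext_iff] at hij
  simp only [Fin.ext_iff, Fin.val_zero, Fin.val_last] at h0 hl
  have hi : 0 < i.val := by omega
  have hj : 0 < j.val := by omega
  have hdel : PermContains (Fin.revPerm * moveTo (⟨i.val - 1, by omega⟩ : Fin (k + 1))
      ⟨j.val - 1, by omega⟩) (Fin.revPerm * moveTo i j) := by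
    obtain ⟨f, hf, hf'⟩ := permContains_moveTo_of_val (m := k) (i := i) (j := j)
      (i' := ⟨i.val - 1, by omega⟩) (j' := ⟨j.val - 1, by omega⟩) 0
      (by simp only [Fin.val_zero]; omega) (by simp only; omega)
    exact ⟨f, hf, fun a b => by simpa using hf' b a⟩
  have := (hcentre hk (hC.closed hdel h) (by simp only [ne_eq, Fin.ext_iff]; omega)).1
  simp only at this
  omega

theorem IsAbelianClass.eq_revPerm {C : ∀ n, Set (Perm (Fin n))} {N n : ℕ}
    (hC : IsAbelianClass C N) (hrev : ∀ m, (Fin.revPerm : Perm (Fin m)) ∈ C m)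
    {π : Perm (Fin n)} (hπ : π ∈ C n) {S : Finset (Fin n)}
    (hS : StrictAntiOn π S) (hN : N + 3 ≤ S.card) : π = Fin.revPerm := by
  have hmem : ∀ {S : Finset (Fin n)}, StrictAntiOn π S → N + 3 ≤ S.card → ∀ p, ∀ s ∈ S, p ≠ s →
      IsInversion π p s := by
    intro S hS hN p s hs hps
    by_cases hp : p ∈ S
    · rcases lt_or_gt_of_ne hps with h | h
      · exact Or.inl ⟨h, hS hp hs h⟩
      · exact Or.inr ⟨h, hS hs hp h⟩
    obtain ⟨k, hk⟩ : ∃ k, S.card = k + 1 := ⟨S.card - 1, by omega⟩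
    have hcard : (insert p S).card = k + 2 := by rw [Finset.card_insert_of_notMem hp, hk]
    obtain ⟨σ, hσC, hσ⟩ := exists_pattern_on π hcard
    set f := (insert p S).orderEmbOfFin hcard
    obtain ⟨i, hi⟩ := exists_orderEmbOfFin_eq hcard (Finset.mem_insert_self p S)
    obtain ⟨a, ha⟩ := exists_orderEmbOfFin_eq hcard (Finset.mem_insert_of_mem (b := p) hs)
    have hfS : ∀ a, a ≠ i → f a ∈ S := fun a ha =>
      (Finset.mem_insert.1 ((insert p S).orderEmbOfFin_mem hcard a)).resolve_left
        fun h => ha (f.injective (h.trans hi.symm))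
    have hσm : StrictMono ((Fin.revPerm * σ : Perm (Fin (k + 2))) ∘ i.succAbove) := fun a b hab => by
      simp only [Function.comp_apply, Perm.mul_apply, Fin.revPerm_apply, Fin.rev_lt_rev]
      rw [hσ]
      exact hS (hfS _ (Fin.succAbove_ne i a)) (hfS _ (Fin.succAbove_ne i b))
        (f.strictMono (Fin.strictMono_succAbove i hab))
    have hσeq : σ = Fin.revPerm * moveTo i ((Fin.revPerm * σ : Perm (Fin (k + 2))) i) := by
      rw [← eq_moveTo_of_strictMono hσm]
      ext a
      simp
    set j := (Fin.revPerm * σ : Perm (Fin (k + 2))) i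
    have hCσ := hC.closed hσC hπ
    rw [hσeq] at hCσ
    have hij : i = j := hC.eq_of_revPerm_mul_moveTo_mem (by omega) (by omega) hrev hCσ
    have hrevσ : ∀ b, σ b = b.rev := by
      intro b
      have h1 := moveTo_val i j b
      have h2 : moveTo i j b = b := by
        rw [Fin.ext_iff] at hij h1 ⊢
        omega
      rw [hσeq, Perm.mul_apply, h2, Fin.revPerm_apply]
    have hlt : ∀ b c, b < c → π (f c) < π (f b) := fun b c hbc => by
      rw [← hσ, hrevσ, hrevσ]
      exact Fin.rev_lt_rev.2 hbc
    rw [← hi, ← ha]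
    rcases lt_or_gt_of_ne (show i ≠ a by rintro rfl; exact hps (hi.symm.trans ha)) with h | h
    · exact Or.inl ⟨f.strictMono h, hlt _ _ h⟩
    · exact Or.inr ⟨f.strictMono h, hlt _ _ h⟩
  refine perm_eq_of_lt_iff fun a b hab => ?_
  have hanti : StrictAntiOn π (insert a S : Finset (Fin n)) := by
    have h1 : ∀ s ∈ S, a ≠ s → IsInversion π a s := hmem hS hN a
    intro c hc d hd hcd
    simp only [Finset.coe_insert, Set.mem_insert_iff, Finset.mem_coe] at hc hd
    rcases hc with rfl | hc <;> rcases hd with rfl | hd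
    · exact absurd hcd (lt_irrefl _)
    · exact (h1 d hd hcd.ne).elim (fun h => h.2) fun h => absurd hcd h.1.not_gt
    · exact (h1 c hc hcd.ne').elim (fun h => absurd hcd h.1.not_gt) fun h => h.2
    · exact hS hc hd hcd
  have h2 := hmem hanti (hN.trans (Finset.card_le_card (Finset.subset_insert a S))) b a
    (Finset.mem_insert_self a S) hab.ne'
  have h3 : π b < π a := h2.elim (fun h => absurd hab h.1.not_gt) fun h => h.2
  exact iff_of_false h3.not_gt (by simp [hab.le])

/-- The transposition of the first two positions. -/
def firstSwap (k : ℕ) : Perm (Fin (k + 4)) := moveTo 0 1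

/-- The transposition of the last two positions. -/
def lastSwap (k : ℕ) : Perm (Fin (k + 4)) := moveTo (Fin.last (k + 1)).castSucc.succ (Fin.last (k + 3))

theorem firstSwap_val {k : ℕ} (a : Fin (k + 4)) :
    (a.val = 0 ∧ (firstSwap k a).val = 1) ∨ (a.val = 1 ∧ (firstSwap k a).val = 0) ∨
    (1 < a.val ∧ (firstSwap k a).val = a.val) := by
  have := moveTo_val 0 1 a
  simp only [Fin.ext_iff, Fin.val_zero, Fin.val_one] at this
  rw [firstSwap]
  omega

theorem lastSwap_val {k : ℕ} (a : Fin (k + 4)) :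
    (a.val = k + 2 ∧ (lastSwap k a).val = k + 3) ∨ (a.val = k + 3 ∧ (lastSwap k a).val = k + 2) ∨
    (a.val < k + 2 ∧ (lastSwap k a).val = a.val) := by
  have := moveTo_val (Fin.last (k + 1)).castSucc.succ (Fin.last (k + 3)) a
  simp only [Fin.ext_iff, Fin.val_succ, Fin.val_castSucc, Fin.val_last] at this
  rw [lastSwap]
  omega

theorem firstSwap_mul_self (k : ℕ) : firstSwap k * firstSwap k = 1 := by
  ext a
  have h1 := firstSwap_val a
  have h2 := firstSwap_val (firstSwap k a)
  rw [Perm.mul_apply, Perm.one_apply]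
  omega

theorem lastSwap_mul_self (k : ℕ) : lastSwap k * lastSwap k = 1 := by
  ext a
  have h1 := lastSwap_val a
  have h2 := lastSwap_val (lastSwap k a)
  rw [Perm.mul_apply, Perm.one_apply]
  omega

theorem firstSwap_mul_lastSwap (k : ℕ) : firstSwap k * lastSwap k = lastSwap k * firstSwap k := by
  ext a
  have h1 := lastSwap_val a
  have h2 := firstSwap_val (lastSwap k a)
  have h3 := firstSwap_val a
  have h4 := lastSwap_val (firstSwap k a)
  rw [Perm.mul_apply, Perm.mul_apply]
  omega

/-- A permutation whose inversions all lie in the first two and the last two positions is the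
identity, the transposition of two extreme positions at one end, or the product of both. -/
theorem eq_of_inversions {k : ℕ} {π : Perm (Fin (k + 4))}
    (h : ∀ x y, x < y → π y < π x → (x.val = 0 ∧ y.val = 1) ∨ (x.val = k + 2 ∧ y.val = k + 3)) :
    π = 1 ∨ π = firstSwap k ∨ π = lastSwap k ∨ π = firstSwap k * lastSwap k := by
  have hiff : ∀ x y : ℕ, ∀ hx : x < k + 4, ∀ hy : y < k + 4, x < y →
      ¬ ((x = 0 ∧ y = 1) ∨ (x = k + 2 ∧ y = k + 3)) → π ⟨x, hx⟩ < π ⟨y, hy⟩ := by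
    intro x y hx hy hxy hnot
    have hne : (⟨x, hx⟩ : Fin (k + 4)) ≠ ⟨y, hy⟩ := by
      rw [ne_eq, Fin.ext_iff]
      exact hxy.ne
    exact lt_of_le_of_ne (not_lt.1 fun h' => hnot (h ⟨x, hx⟩ ⟨y, hy⟩ hxy h')) (π.injective.ne hne)
  have hfirst : ∀ x y : Fin (k + 4), x.val = 0 → y.val = 1 →
      (π x < π y ↔ π ⟨0, by omega⟩ < π ⟨1, by omega⟩) := by
    rintro ⟨x, hx⟩ ⟨y, hy⟩ rfl rfl
    rfl
  have hlast : ∀ x y : Fin (k + 4), x.val = k + 2 → y.val = k + 3 →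
      (π x < π y ↔ π ⟨k + 2, by omega⟩ < π ⟨k + 3, by omega⟩) := by
    rintro ⟨x, hx⟩ ⟨y, hy⟩ rfl rfl
    rfl
  have hone : ∀ a : Fin (k + 4), ((1 : Perm (Fin (k + 4))) a).val = a.val := fun _ => rfl
  have main : ∀ τ : Perm (Fin (k + 4)),
      (∀ a b : Fin (k + 4), a.val = 0 → b.val = 1 →
        (π ⟨0, by omega⟩ < π ⟨1, by omega⟩ ↔ τ a < τ b)) →
      (∀ a b : Fin (k + 4), a.val = k + 2 → b.val = k + 3 →
        (π ⟨k + 2, by omega⟩ < π ⟨k + 3, by omega⟩ ↔ τ a < τ b)) →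
      (∀ a b : Fin (k + 4), a < b →
        ¬ ((a.val = 0 ∧ b.val = 1) ∨ (a.val = k + 2 ∧ b.val = k + 3)) → τ a < τ b) → π = τ := by
    intro τ h0 h1 h2
    refine perm_eq_of_lt_iff fun a b hab => ?_
    by_cases ha : a.val = 0 ∧ b.val = 1
    · exact (hfirst a b ha.1 ha.2).trans (h0 a b ha.1 ha.2)
    by_cases hb : a.val = k + 2 ∧ b.val = k + 3
    · exact (hlast a b hb.1 hb.2).trans (h1 a b hb.1 hb.2)
    · have hnot := not_or.2 ⟨ha, hb⟩
      exact iff_of_true (hiff a b a.isLt b.isLt hab hnot) (h2 a b hab hnot)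
  by_cases h0 : π ⟨0, by omega⟩ < π ⟨1, by omega⟩ <;>
    by_cases h1 : π ⟨k + 2, by omega⟩ < π ⟨k + 3, by omega⟩
  · refine Or.inl (main 1 ?_ ?_ ?_)
    all_goals
      intro a b hab hab'
      simp only [h0, h1, true_iff, Fin.lt_def, hone] at *
      omega
  · refine Or.inr (Or.inr (Or.inl (main _ ?_ ?_ ?_)))
    all_goals
      intro a b hab hab'
      have ha := lastSwap_val a
      have hb := lastSwap_val b
      simp only [h0, h1, true_iff, false_iff, Fin.lt_def] at *
      omega
  · refine Or.inr (Or.inl (main _ ?_ ?_ ?_))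
    all_goals
      intro a b hab hab'
      have ha := firstSwap_val a
      have hb := firstSwap_val b
      simp only [h0, h1, true_iff, false_iff, Fin.lt_def] at *
      omega
  · refine Or.inr (Or.inr (Or.inr (main _ ?_ ?_ ?_)))
    all_goals
      intro a b hab hab'
      have ha := lastSwap_val a
      have hb := lastSwap_val b
      have ha' := firstSwap_val (lastSwap k a)
      have hb' := firstSwap_val (lastSwap k b)
      simp only [h0, h1, false_iff, Fin.lt_def, Perm.mul_apply] at *
      omega

/-- A nontrivial group generated by part of `{1, a, b, a * b}`, for commuting involutions `a` and
`b`, is cyclic of order two or a Klein four-group. -/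
theorem nonempty_mulEquiv_of_subset {α G : Type*} [Group α] [Group G] [Nontrivial G]
    {A : Set α} {a b : α} (e : Subgroup.closure A ≃* G) (ha : a * a = 1) (hb : b * b = 1)
    (hab : a * b = b * a) (hA : ∀ x ∈ A, x = 1 ∨ x = a ∨ x = b ∨ x = a * b) :
    Nonempty (G ≃* Multiplicative (ZMod 2)) ∨
      Nonempty (G ≃* Multiplicative (ZMod 2) × Multiplicative (ZMod 2)) := by
  classical
  have haab : a * (a * b) = b := by rw [← mul_assoc, ha, one_mul]
  have hbab : b * (a * b) = a := by rw [hab, ← mul_assoc, hb, one_mul]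
  let V : Subgroup α :=
    { carrier := {x | x = 1 ∨ x = a ∨ x = b ∨ x = a * b}
      one_mem' := Or.inl rfl
      mul_mem' := by
        rintro x y (rfl | rfl | rfl | rfl) (rfl | rfl | rfl | rfl) <;>
          simp [mul_assoc, ha, hb, ← hab, haab, hbab]
      inv_mem' := by
        have ha' : a⁻¹ = a := inv_eq_of_mul_eq_one_right ha
        have hb' : b⁻¹ = b := inv_eq_of_mul_eq_one_right hb
        rintro x (rfl | rfl | rfl | rfl) <;> simp [ha', hb', hab] }
  have hV : ∀ x ∈ Subgroup.closure A, x = 1 ∨ x = a ∨ x = b ∨ x = a * b :=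
    fun x hx => (Subgroup.closure_le V).2 hA hx
  have hsq : ∀ g : G, g ^ 2 = 1 := by
    intro g
    obtain ⟨⟨x, hx⟩, rfl⟩ := e.surjective g
    rw [← map_pow, map_eq_one_iff e e.injective, Subtype.ext_iff]
    change x ^ 2 = 1
    rcases hV x hx with rfl | rfl | rfl | rfl <;> rw [pow_two]
    · simp
    · exact ha
    · exact hb
    · rw [mul_assoc, hbab, ha]
  have hsub : (Subgroup.closure A : Set α) ⊆ ({1, a, b, a * b} : Finset α) := fun x hx => by
    simpa using hV x hx
  have : Finite (Subgroup.closure A) := (Finset.finite_toSet _).subset hsub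
  have : Finite G := Finite.of_equiv _ e.toEquiv
  have hcard : Nat.card G ≤ 4 := by
    rw [← Nat.card_congr e.toEquiv]
    calc Nat.card (Subgroup.closure A) = (Subgroup.closure A : Set α).ncard := rfl
      _ ≤ ({1, a, b, a * b} : Finset α).card := by
        rw [← Set.ncard_coe_finset]
        exact Set.ncard_le_ncard hsub (Finset.finite_toSet _)
      _ ≤ 4 := Finset.card_le_four
  have hexp : Monoid.exponent G = 2 := Monoid.exponent_eq_prime_iff Nat.prime_two |>.2 fun g hg =>
    orderOf_eq_prime (hsq g) hg
  obtain ⟨r, hr⟩ := IsPGroup.iff_card.1 (show IsPGroup 2 G from fun g => ⟨1, by simpa using hsq g⟩)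
  have h1 : 1 < Nat.card G := Finite.one_lt_card
  have hr2 : r < 3 := by
    by_contra h
    have := Nat.pow_le_pow_right (n := 2) (by norm_num) (not_lt.1 h)
    omega
  interval_cases r
  · omega
  · left
    have : Fact (Nat.Prime 2) := ⟨Nat.prime_two⟩
    exact ⟨mulEquivOfPrimeCardEq (p := 2) hr (by simp)⟩
  · right
    have : IsKleinFour G := ⟨hr, hexp⟩
    have : IsKleinFour (Multiplicative (ZMod 2) × Multiplicative (ZMod 2)) := by
      refine ⟨by simp, ?_⟩
      rw [Monoid.exponent_prod, Monoid.exponent_multiplicative, ZMod.exponent]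
      rfl
    exact IsKleinFour.nonempty_mulEquiv

theorem permContains_revPerm {n m : ℕ} {π : Perm (Fin n)} {S : Finset (Fin n)}
    (hS : StrictAntiOn π S) (hm : m ≤ S.card) :
    PermContains (Fin.revPerm : Perm (Fin m)) π := by
  obtain ⟨S', hS', rfl⟩ := Finset.exists_subset_card_eq hm
  refine ⟨S'.orderEmbOfFin rfl, (S'.orderEmbOfFin rfl).strictMono, fun a b => ?_⟩
  rw [hS.lt_iff_gt (hS' (S'.orderEmbOfFin_mem rfl a)) (hS' (S'.orderEmbOfFin_mem rfl b))]
  simp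

theorem isAbelianClass_avoidSet (T : Set (Σ k : ℕ, Perm (Fin k))) (G : Type*) [CommGroup G]
    [Finite G] {n₀ : ℕ} (h : ∀ n, n₀ ≤ n → Nonempty (Subgroup.closure (avoidSet n T) ≃* G)) :
    IsAbelianClass (fun n => avoidSet n T) (n₀ + Nat.card G + 1) where
  closed hτ hπ ρ hρ hρτ := hπ ρ hρ (hρτ.trans hτ)
  comm {n} hn σ τ hσ hτ := by
    obtain ⟨e⟩ := h n (by omega)
    have := e.injective (a₁ := ⟨σ, Subgroup.subset_closure hσ⟩ * ⟨τ, Subgroup.subset_closure hτ⟩)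
      (a₂ := ⟨τ, Subgroup.subset_closure hτ⟩ * ⟨σ, Subgroup.subset_closure hσ⟩)
      (by rw [map_mul, map_mul, mul_comm])
    exact congrArg Subtype.val this
  pow := by
    refine ⟨Nat.card G, Nat.card_pos, by omega, fun {n} hn σ hσ => ?_⟩
    obtain ⟨e⟩ := h n (by omega)
    have := e.injective (a₁ := ⟨σ, Subgroup.subset_closure hσ⟩ ^ Nat.card G) (a₂ := 1)
      (by rw [map_pow, map_one, pow_card_eq_one'])
    exact congrArg Subtype.val this

theorem abelian_eventually_constant_group (T : Set (Σ k : ℕ, Equiv.Perm (Fin k)))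
    (G : Type) [CommGroup G] [Finite G] [Nontrivial G]
    (h : ∃ n₀ : ℕ, ∀ n : ℕ, n₀ ≤ n →
      Nonempty (Subgroup.closure (avoidSet n T) ≃* G)) :
    Nonempty (G ≃* Multiplicative (ZMod 2)) ∨
      Nonempty (G ≃* Multiplicative (ZMod 2) × Multiplicative (ZMod 2)) := by
  obtain ⟨n₀, h⟩ := h
  have hC := isAbelianClass_avoidSet T G h
  set N := n₀ + Nat.card G + 1 with hN
  have hmono : ∀ {k} {π : Perm (Fin (k + 4))}, π ∈ avoidSet (k + 4) T →
      ∀ {S : Finset (Fin (k + 4))}, StrictMonoOn π S → N + 5 ≤ S.card →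
      π = 1 ∨ π = firstSwap k ∨ π = lastSwap k ∨ π = firstSwap k * lastSwap k :=
    fun hπ _ hS hcard => eq_of_inversions fun x y hxy hxy' => by
      have := hC.inversion_of_increasing hπ hS hcard hxy hxy'
      omega
  by_cases hrev : ∀ m, (Fin.revPerm : Perm (Fin m)) ∈ avoidSet m T
  · obtain ⟨k, hk⟩ : ∃ k, k = N + 2 ^ ((N + 5) + (N + 3)) := ⟨_, rfl⟩
    have hpos := Nat.two_pow_pos ((N + 5) + (N + 3))
    obtain ⟨e⟩ := h (k + 4) (by omega)
    have hcases : ∀ π ∈ avoidSet (k + 4) T,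
        π = 1 ∨ π = firstSwap k * lastSwap k ∨ π = Fin.revPerm := by
      intro π hπ
      rcases exists_strictMonoOn_or_strictAntiOn π (N + 5) (N + 3) Finset.univ
        (by rw [Finset.card_univ, Fintype.card_fin]; omega) with ⟨S, -, hS, hSm⟩ | ⟨S, -, hS, hSm⟩
      · have hcomm := congrArg (fun σ : Perm (Fin (k + 4)) => (σ 0).val)
          (hC.comm (by omega) hπ (hrev (k + 4)))
        simp only [Perm.mul_apply, Fin.revPerm_apply, Fin.rev_zero, Fin.val_rev] at hcomm
        rcases hmono hπ hSm hS with rfl | rfl | rfl | rfl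
        · exact Or.inl rfl
        · have h1 := firstSwap_val (0 : Fin (k + 4))
          have h2 := firstSwap_val (Fin.last (k + 3))
          simp only [Fin.val_zero, Fin.val_last] at h1 h2
          omega
        · have h1 := lastSwap_val (0 : Fin (k + 4))
          have h2 := lastSwap_val (Fin.last (k + 3))
          simp only [Fin.val_zero, Fin.val_last] at h1 h2
          omega
        · exact Or.inr (Or.inl rfl)
      · exact Or.inr (Or.inr (hC.eq_revPerm hrev hπ hSm hS))
    have hrr : (Fin.revPerm * Fin.revPerm : Perm (Fin (k + 4))) = 1 := by
      ext a
      simp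
    by_cases hst : firstSwap k * lastSwap k ∈ avoidSet (k + 4) T
    · refine nonempty_mulEquiv_of_subset e (a := firstSwap k * lastSwap k) (b := Fin.revPerm)
        ?_ hrr (hC.comm (by omega) hst (hrev _)) fun π hπ => ?_
      · rw [mul_assoc, ← mul_assoc (lastSwap k), ← firstSwap_mul_lastSwap,
          mul_assoc (firstSwap k), lastSwap_mul_self, mul_one, firstSwap_mul_self]
      · rcases hcases π hπ with h | h | h <;> simp [h]
    · refine nonempty_mulEquiv_of_subset e (a := 1) (b := Fin.revPerm) (one_mul 1) hrr
        (by rw [one_mul, mul_one]) fun π hπ => ?_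
      rcases hcases π hπ with rfl | rfl | rfl
      · exact Or.inl rfl
      · exact absurd hπ hst
      · exact Or.inr (Or.inr (Or.inl rfl))
  · rw [not_forall] at hrev
    obtain ⟨m, hm⟩ := hrev
    obtain ⟨k, hk⟩ : ∃ k, k = N + 2 ^ ((N + 5) + m) := ⟨_, rfl⟩
    have hpos := Nat.two_pow_pos ((N + 5) + m)
    obtain ⟨e⟩ := h (k + 4) (by omega)
    refine nonempty_mulEquiv_of_subset e (firstSwap_mul_self k) (lastSwap_mul_self k)
      (firstSwap_mul_lastSwap k) fun π hπ => ?_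
    rcases exists_strictMonoOn_or_strictAntiOn π (N + 5) m Finset.univ
      (by rw [Finset.card_univ, Fintype.card_fin]; omega) with ⟨S, -, hS, hSm⟩ | ⟨S, -, hS, hSm⟩
    · exact hmono hπ hSm hS
    · exact absurd (hC.closed (permContains_revPerm hSm hS) hπ) hm
end

section
/- For every n ≥ 3, the subgroup ⟨S_n({123, 231, 312, 1432})⟩ of S_n is isomorphic to the dihedral group D_n of order 2n. -/
def p231 : Equiv.Perm (Fin 3) := finRotate 3
def p312 : Equiv.Perm (Fin 3) := (finRotate 3)⁻¹
/-- The pattern 1432. -/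
def p1432 : Equiv.Perm (Fin 4) := Equiv.swap 1 3

/-- The action of the dihedral group on `ZMod n` with `r i` acting as `x ↦ i + x` and `sr i` as
`x ↦ -i - x`. -/
def dihedralToPerm (n : ℕ) : DihedralGroup n →* Equiv.Perm (ZMod n) where
  toFun
    | .r i => Equiv.addLeft i
    | .sr i => Equiv.subLeft (-i)
  map_one' := by
    change Equiv.addLeft (0 : ZMod n) = 1
    ext x
    simp
  map_mul' := by
    rintro (i | i) (j | j)
    · change Equiv.addLeft (i + j) = Equiv.addLeft i * Equiv.addLeft j
      ext x
      simp
    · change Equiv.subLeft (-(j - i)) = Equiv.addLeft i * Equiv.subLeft (-j)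
      refine Equiv.ext fun x => ?_
      simp only [Equiv.Perm.mul_apply, Equiv.coe_addLeft, Equiv.subLeft_apply]
      ring
    · change Equiv.subLeft (-(i + j)) = Equiv.subLeft (-i) * Equiv.addLeft j
      refine Equiv.ext fun x => ?_
      simp only [Equiv.Perm.mul_apply, Equiv.coe_addLeft, Equiv.subLeft_apply]
      ring
    · change Equiv.addLeft (j - i) = Equiv.subLeft (-i) * Equiv.subLeft (-j)
      refine Equiv.ext fun x => ?_
      simp only [Equiv.Perm.mul_apply, Equiv.coe_addLeft, Equiv.subLeft_apply]
      ring

@[simp]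
theorem dihedralToPerm_r {n : ℕ} (i x : ZMod n) : dihedralToPerm n (.r i) x = i + x := rfl

@[simp]
theorem dihedralToPerm_sr {n : ℕ} (i x : ZMod n) : dihedralToPerm n (.sr i) x = -i - x := rfl

theorem dihedralToPerm_injective {n : ℕ} (hn : 3 ≤ n) :
    Function.Injective (dihedralToPerm n) := by
  rw [injective_iff_map_eq_one]
  rintro (i | i) h
  · have h0 := Equiv.congr_fun h 0
    simp only [dihedralToPerm_r, add_zero, Equiv.Perm.one_apply] at h0
    rw [h0]
    rfl
  · have h0 := Equiv.congr_fun h 0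
    have h1 := Equiv.congr_fun h 1
    simp only [dihedralToPerm_sr, sub_zero, Equiv.Perm.one_apply] at h0 h1
    have h2 : ((2 : ℕ) : ZMod n) = 0 := by
      push_cast
      linear_combination h0 - h1
    have := Nat.le_of_dvd two_pos ((ZMod.natCast_eq_zero_iff 2 n).1 h2)
    omega

theorem DihedralGroup.eq_top_of_sr_mem {n : ℕ} (K : Subgroup (DihedralGroup n))
    {i : ZMod n} (h₁ : .sr i ∈ K) (h₂ : .sr (i + 1) ∈ K) : K = ⊤ := by
  have hr (j : ZMod n) : .r j ∈ K := by
    obtain ⟨k, rfl⟩ := ZMod.intCast_surjective j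
    have h := K.zpow_mem (K.mul_mem h₁ h₂) k
    simpa using h
  rw [Subgroup.eq_top_iff']
  rintro (j | j)
  · exact hr j
  · simpa using K.mul_mem h₁ (hr (j - i))

/-- If `π` avoids 123, 231 and 312, then consecutive values of `π` decrease by one modulo `n`. -/
theorem apply_succ_of_avoids {n : ℕ} {π : Equiv.Perm (Fin n)}
    (h123 : ∀ a b c, a < b → b < c → π a < π b → π b < π c → False)
    (h231 : ∀ a b c, a < b → b < c → π c < π a → π a < π b → False)
    (h312 : ∀ a b c, a < b → b < c → π b < π c → π c < π a → False)
    {i j : Fin n} (hij : (j : ℕ) = i + 1) :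
    (((π j : ℕ) : ZMod n)) = (π i : ℕ) - 1 := by
  have hlt : i < j := by omega
  have split (v : Fin n) (h1 : v ≠ π i) (h2 : v ≠ π j) :
      ∃ k, π k = v ∧ (k < i ∨ j < k) := by
    refine ⟨π.symm v, by simp, ?_⟩
    have h3 : π.symm v ≠ i := fun h => h1 (by rw [← h]; simp)
    have h4 : π.symm v ≠ j := fun h => h2 (by rw [← h]; simp)
    omega
  rcases lt_or_gt_of_ne (π.injective.ne hlt.ne) with h | h
  · have hi : (π i : ℕ) = 0 := by
      by_contra hne
      obtain ⟨k, hk, hki | hki⟩ := split ⟨0, by omega⟩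
        (by rw [Ne, Fin.ext_iff]; simp only; omega) (by rw [Ne, Fin.ext_iff]; simp only; omega)
      all_goals have hk' : (π k : ℕ) = 0 := by rw [hk]
      · exact h123 k i j hki hlt (by omega) h
      · exact h231 i j k hlt hki (by omega) h
    have hj : (π j : ℕ) + 1 = n := by
      by_contra hne
      obtain ⟨k, hk, hki | hki⟩ := split ⟨n - 1, by omega⟩
        (by rw [Ne, Fin.ext_iff]; simp only; omega) (by rw [Ne, Fin.ext_iff]; simp only; omega)
      all_goals have hk' : (π k : ℕ) = n - 1 := by rw [hk]
      · exact h312 k i j hki hlt h (by omega)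
      · exact h123 i j k hlt hki h (by omega)
    have hz : (((π j : ℕ) + 1 : ℕ) : ZMod n) = 0 := by rw [hj]; simp
    push_cast at hz
    rw [hi]
    push_cast
    linear_combination hz
  · have hi : (π i : ℕ) = π j + 1 := by
      by_contra hne
      obtain ⟨k, hk, hki | hki⟩ := split ⟨π j + 1, by omega⟩
        (by rw [Ne, Fin.ext_iff]; simp only; omega) (by rw [Ne, Fin.ext_iff]; simp only; omega)
      all_goals have hk' : (π k : ℕ) = π j + 1 := by rw [hk]
      · exact h231 k i j hki hlt (by omega) (by omega)
      · exact h312 i j k hlt hki (by omega) (by omega)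
    rw [hi]
    push_cast
    ring

theorem permContains_of_three {n : ℕ} {τ : Equiv.Perm (Fin 3)} {π : Equiv.Perm (Fin n)}
    {a b c : Fin n} (hab : a < b) (hbc : b < c)
    (h : ∀ x y, τ x < τ y ↔ π (![a, b, c] x) < π (![a, b, c] y)) : PermContains τ π := by
  refine ⟨![a, b, c], ?_, h⟩
  rw [Fin.strictMono_iff_lt_succ]
  intro i
  fin_cases i
  · exact hab
  · exact hbc

theorem forall_apply_eq_of_avoids {n : ℕ} {π : Equiv.Perm (Fin n)} (hn : 0 < n)
    (h : π ∈ avoidSet n {⟨3, 1⟩, ⟨3, p231⟩, ⟨3, p312⟩, ⟨4, p1432⟩}) (i : Fin n) :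
    ((π i : ℕ) : ZMod n) = (π ⟨0, hn⟩ : ℕ) - (i : ℕ) := by
  have v0 : p231 0 = 1 := by decide
  have v1 : p231 1 = 2 := by decide
  have v2 : p231 2 = 0 := by decide
  have w0 : p312 0 = 2 := by decide
  have w1 : p312 1 = 0 := by decide
  have w2 : p312 2 = 1 := by decide
  have key {a b : Fin n} (hab : (b : ℕ) = a + 1) :
      (((π b : ℕ) : ZMod n)) = (π a : ℕ) - 1 := by
    refine apply_succ_of_avoids (fun a b c hab hbc h1 h2 => h ⟨3, 1⟩ (by simp) ?_)
      (fun a b c hab hbc h1 h2 => h ⟨3, p231⟩ (by simp) ?_)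
      (fun a b c hab hbc h1 h2 => h ⟨3, p312⟩ (by simp) ?_) hab
    all_goals
      refine permContains_of_three hab hbc fun x y => ?_
      fin_cases x <;> fin_cases y <;>
        simp [v0, v1, v2, w0, w1, w2] <;> omega
  obtain ⟨k, hk⟩ := i
  induction k with
  | zero => simp
  | succ k ih =>
    rw [key (a := ⟨k, by omega⟩) rfl, ih]
    push_cast
    ring

/-- A permutation avoids 123, 231, 312 and 1432 if every pair of increasing entries ends in the
last position, and its larger entry is the maximal value. -/
theorem mem_avoidSet_of_ascents {n : ℕ} {π : Equiv.Perm (Fin n)}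
    (h : ∀ a b, a < b → π a < π b → (∀ c, c ≤ b) ∧ ∀ c, π c ≤ π b) :
    π ∈ avoidSet n {⟨3, 1⟩, ⟨3, p231⟩, ⟨3, p312⟩, ⟨4, p1432⟩} := by
  rintro τ (rfl | rfl | rfl | rfl) ⟨f, hf, hfπ⟩
  · exact ((h _ _ (hf (show (0 : Fin 3) < 1 by decide)) ((hfπ 0 1).1 (by decide))).1 (f 2)).not_gt
      (hf (show (1 : Fin 3) < 2 by decide))
  · exact ((h _ _ (hf (show (0 : Fin 3) < 1 by decide)) ((hfπ 0 1).1 (by decide))).1 (f 2)).not_gt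
      (hf (show (1 : Fin 3) < 2 by decide))
  · exact ((h _ _ (hf (show (1 : Fin 3) < 2 by decide)) ((hfπ 1 2).1 (by decide))).2 (f 0)).not_gt
      ((hfπ 2 0).1 (by decide))
  · exact ((h _ _ (hf (show (0 : Fin 4) < 1 by decide)) ((hfπ 0 1).1 (by decide))).1 (f 2)).not_gt
      (hf (show (1 : Fin 4) < 2 by decide))

/-- The action of `dihedralToPerm`, transported to `Fin`. -/
def dihedralToPermFin (m : ℕ) : DihedralGroup (m + 3) →* Equiv.Perm (Fin (m + 3)) :=
  dihedralToPerm (m + 3)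

theorem dihedralToPermFin_injective (m : ℕ) : Function.Injective (dihedralToPermFin m) :=
  dihedralToPerm_injective (Nat.le_add_left 3 m)

theorem natCast_dihedralToPermFin_sr {m : ℕ} (i : ZMod (m + 3)) (x : Fin (m + 3)) :
    ((dihedralToPermFin m (.sr i) x : ℕ) : ZMod (m + 3)) = -i - (x : ℕ) :=
  (ZMod.natCast_zmod_val (dihedralToPerm (m + 3) (.sr i) x)).trans
    (congrArg (-i - ·) (ZMod.natCast_zmod_val (n := m + 3) x).symm)

theorem dihedralToPermFin_sr_val_eq {m k : ℕ} (i : ZMod (m + 3)) (x : Fin (m + 3))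
    (hk : k < m + 3) (h : i + (x : ℕ) + k = 0) : (dihedralToPermFin m (.sr i) x : ℕ) = k := by
  have h' : ((dihedralToPermFin m (.sr i) x : ℕ) : ZMod (m + 3)) = k := by
    rw [natCast_dihedralToPermFin_sr]
    linear_combination -h
  rw [ZMod.natCast_eq_natCast_iff'] at h'
  rwa [Nat.mod_eq_of_lt (Fin.is_lt _), Nat.mod_eq_of_lt hk] at h'

theorem val_dihedralToPermFin_sr_one {m : ℕ} (x : Fin (m + 3)) :
    (dihedralToPermFin m (.sr 1) x : ℕ) = m + 2 - x := by
  refine dihedralToPermFin_sr_val_eq _ _ (by omega) ?_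
  rw [Nat.cast_sub (by omega)]
  have := ZMod.natCast_self (m + 3)
  push_cast at this ⊢
  linear_combination this

theorem val_dihedralToPermFin_sr_two {m : ℕ} (x : Fin (m + 3)) :
    (dihedralToPermFin m (.sr (1 + 1)) x : ℕ) =
      if (x : ℕ) = m + 2 then m + 2 else m + 1 - x := by
  have hz := ZMod.natCast_self (m + 3)
  refine dihedralToPermFin_sr_val_eq _ _ (by split_ifs <;> omega) ?_
  split_ifs with h
  · rw [h]
    push_cast at hz ⊢
    linear_combination 2 * hz
  · rw [Nat.cast_sub (by omega)]
    push_cast at hz ⊢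
    linear_combination hz

theorem closure_avoidSet_eq_range (m : ℕ) :
    Subgroup.closure (avoidSet (m + 3) {⟨3, 1⟩, ⟨3, p231⟩, ⟨3, p312⟩, ⟨4, p1432⟩}) =
      (dihedralToPermFin m).range := by
  apply le_antisymm
  · rw [Subgroup.closure_le]
    intro π hπ
    refine ⟨.sr (-((π 0 : ℕ) : ZMod (m + 3))), Equiv.ext fun x => Fin.ext ?_⟩
    refine dihedralToPermFin_sr_val_eq _ _ (Fin.is_lt _) ?_
    rw [forall_apply_eq_of_avoids (by omega) hπ x]
    simp
  · rw [MonoidHom.range_eq_map, Subgroup.map_le_iff_le_comap, top_le_iff]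
    refine DihedralGroup.eq_top_of_sr_mem (i := 1) _
      (Subgroup.subset_closure (mem_avoidSet_of_ascents ?_))
      (Subgroup.subset_closure (mem_avoidSet_of_ascents ?_))
    · intro a b hab h
      have h1 := val_dihedralToPermFin_sr_one a
      have h2 := val_dihedralToPermFin_sr_one b
      omega
    · intro a b hab h
      have h1 := val_dihedralToPermFin_sr_two a
      have h2 := val_dihedralToPermFin_sr_two b
      have hb : (b : ℕ) = m + 2 := by split_ifs at h1 h2 <;> omega
      rw [if_pos hb] at h2
      exact ⟨fun c => by omega, fun c => by omega⟩

theorem closure_avoid_123_231_312_1432_dihedral (n : ℕ) (hn : 3 ≤ n) :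
    Nonempty (Subgroup.closure
      (avoidSet n ({⟨3, (1 : Equiv.Perm (Fin 3))⟩, ⟨3, p231⟩, ⟨3, p312⟩, ⟨4, p1432⟩} :
        Set (Σ k : ℕ, Equiv.Perm (Fin k)))) ≃* DihedralGroup n) := by
  obtain ⟨m, rfl⟩ := Nat.exists_eq_add_of_le' hn
  rw [closure_avoidSet_eq_range m]
  exact ⟨(MonoidHom.ofInjective (dihedralToPermFin_injective m)).symm⟩
end
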